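/- Let A be a real m×n matrix, b ∈ ℝᵐ, u ∈ ℝⁿ, τ > 0, and let X = I₁ × ⋯ × Iₙ ⊆ ℝⁿ be a box with each Iᵢ ∈ T₁ ∪ T₂. Define s : ℝᵐ → ℝⁿ componentwise by s(y)ᵢ = [τ·shrink(τ⁻¹uᵢ + (Aᵀy)ᵢ)]_{Iᵢ}⁺. Then the dual solution set {y ∈ ℝᵐ : A·s(y) = b} is a convex subset of ℝᵐ. -/

import Mathlib

/-!
Each coordinate `s(y)ᵢ` is a nondecreasing function of `(Aᵀy)ᵢ`, since shrinkage and the projection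
onto an interval are both nondecreasing (`shrink_mono`, `IsProjR.mono`). If `y₁`, `y₂` satisfy
`A s(y₁) = A s(y₂)`, then
`∑ᵢ (Aᵀ(y₁ - y₂))ᵢ (s(y₁) - s(y₂))ᵢ = ⟪y₁ - y₂, A (s(y₁) - s(y₂))⟫ = 0`, and every summand is
nonnegative by monotonicity, hence zero. So `s(y₁) = s(y₂)`, and monotonicity forces `s` to take the
same value on the whole segment between `y₁` and `y₂`.
-/

noncomputable section

open scoped RealInnerProductSpace

/-- The shrinkage operator `shrink(s) = sign(s) * max (|s| - 1) 0`. -/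
def shrink (s : ℝ) : ℝ := Real.sign s * max (|s| - 1) 0

/-- `IsProjR I w p` : `p` is the projection of `w` onto `I ⊆ ℝ`. -/
def IsProjR (I : Set ℝ) (w p : ℝ) : Prop := p ∈ I ∧ ∀ t ∈ I, |p - w| ≤ |t - w|

/-- Membership in the class `T₁` of intervals. -/
def InT1 (I : Set ℝ) : Prop :=
  (∃ c : ℝ, 0 < c ∧ I = Set.Ici c) ∨
  (∃ c : ℝ, c < 0 ∧ I = Set.Iic c) ∨
  (∃ c d : ℝ, 0 < c ∧ c < d ∧ I = Set.Icc c d) ∨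
  (∃ c d : ℝ, d < c ∧ c < 0 ∧ I = Set.Icc d c)

/-- Membership in the class `T₂` of intervals. -/
def InT2 (I : Set ℝ) : Prop := ∃ c d : ℝ, c < 0 ∧ 0 < d ∧ I = Set.Icc c d

/-- The ℓ²→ℓ² operator norm of a matrix. -/
def opNorm {m n : ℕ} (A : Matrix (Fin m) (Fin n) ℝ) : ℝ :=
  ‖LinearMap.toContinuousLinearMap (Matrix.toEuclideanLin A)‖

theorem shrink_eq (s : ℝ) : shrink s = max (s - 1) 0 + min (s + 1) 0 := by
  unfold shrink
  rcases lt_trichotomy s 0 with h | h | h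
  · rw [Real.sign_of_neg h, abs_of_neg h, max_eq_right (by linarith : s - 1 ≤ 0)]
    rcases le_total (s + 1) 0 with h1 | h1
    · rw [min_eq_left h1, max_eq_left (by linarith)]; ring
    · rw [min_eq_right h1, max_eq_right (by linarith)]; ring
  · subst h; norm_num
  · rw [Real.sign_of_pos h, abs_of_pos h, min_eq_right (by linarith : (0 : ℝ) ≤ s + 1)]; ring

theorem shrink_mono : Monotone shrink := by
  intro s t h
  rw [shrink_eq, shrink_eq]
  gcongr

theorem ordConnected_of_inT {I : Set ℝ} (h : InT1 I ∨ InT2 I) : I.OrdConnected := by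
  rcases h with (⟨c, _, rfl⟩ | ⟨c, _, rfl⟩ | ⟨c, d, _, _, rfl⟩ | ⟨c, d, _, _, rfl⟩) | ⟨c, d, _, _, rfl⟩
  · exact Set.ordConnected_Ici
  · exact Set.ordConnected_Iic
  all_goals exact Set.ordConnected_Icc

/-- Projection is nondecreasing. Taking `w = w'`, this includes uniqueness of the projection,
which is where order-connectedness of `I` is needed. -/
theorem IsProjR.mono {I : Set ℝ} (hI : I.OrdConnected) {w w' p p' : ℝ}
    (h : IsProjR I w p) (h' : IsProjR I w' p') (hw : w ≤ w') : p ≤ p' := by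
  by_contra! hlt
  -- If `p' < p`, minimality puts `w'` at or below the midpoint and `w` at or above it; so both are
  -- the midpoint, which lies in `I` and is strictly closer than `p`.
  have h1 := sq_le_sq.mpr (h.2 _ h'.1)
  have h2 := sq_le_sq.mpr (h'.2 _ h.1)
  have e1 : (p + p') / 2 ≤ w := by nlinarith
  have e2 : w' ≤ (p + p') / 2 := by nlinarith
  have hm := hI.out h'.1 h.1 (⟨by linarith, by linarith⟩ : (p + p') / 2 ∈ Set.Icc p' p)
  have h3 := sq_le_sq.mpr (h.2 _ hm)
  have e3 : w = (p + p') / 2 := by linarith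
  subst e3
  nlinarith

/-- The adjoint identity `⟪Aᵀ y, x⟫ = ⟪y, A x⟫` in coordinates. -/
theorem sum_transpose_mul {m n : ℕ} (A : Matrix (Fin m) (Fin n) ℝ)
    (y : EuclideanSpace ℝ (Fin m)) (x : EuclideanSpace ℝ (Fin n)) :
    ∑ i, Matrix.toEuclideanLin A.transpose y i * x i
      = ∑ j, y j * Matrix.toEuclideanLin A x j := by
  have h := Matrix.dotProduct_mulVec y.ofLp A x.ofLp
  rw [← Matrix.mulVec_transpose] at h
  simpa [dotProduct, Matrix.toLpLin_apply] using h.symm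

/-- the dual solution set `{y : A·s(y) = b}` is convex. -/
theorem dual_solution_set_convex {m n : ℕ} (A : Matrix (Fin m) (Fin n) ℝ)
    (b : EuclideanSpace ℝ (Fin m)) (u : EuclideanSpace ℝ (Fin n))
    (τ : ℝ) (hτ : 0 < τ)
    (I : Fin n → Set ℝ) (hI : ∀ i, InT1 (I i) ∨ InT2 (I i))
    (X : Set (EuclideanSpace ℝ (Fin n))) (hX : X = {x | ∀ i, x i ∈ I i})
    (S : EuclideanSpace ℝ (Fin m) → EuclideanSpace ℝ (Fin n))
    (hS : ∀ y i, IsProjR (I i)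
      (τ * shrink (τ⁻¹ * u i + Matrix.toEuclideanLin A.transpose y i)) (S y i)) :
    Convex ℝ {y : EuclideanSpace ℝ (Fin m) | Matrix.toEuclideanLin A (S y) = b} := by
  set v := Matrix.toEuclideanLin A.transpose with hv
  have mono : ∀ y y' i, v y i ≤ v y' i → S y i ≤ S y' i := fun y y' i h =>
    (hS y i).mono (ordConnected_of_inT (hI i)) (hS y' i)
      (mul_le_mul_of_nonneg_left (shrink_mono (by linarith)) hτ.le)
  intro y hy z hz a c ha hc hac
  simp only [Set.mem_ofPred_eq] at hy hz ⊢
  have hsum : ∑ i, (v y i - v z i) * (S y i - S z i) = 0 := by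
    have h := sum_transpose_mul A (y - z) (S y - S z)
    rw [map_sub (Matrix.toEuclideanLin A), hy, hz, map_sub, ← hv] at h
    simpa using h
  have hnn : ∀ i ∈ Finset.univ, 0 ≤ (v y i - v z i) * (S y i - S z i) := by
    intro i _
    rcases le_total (v y i) (v z i) with h | h
    · exact mul_nonneg_of_nonpos_of_nonpos (by linarith) (by linarith [mono y z i h])
    · exact mul_nonneg (by linarith) (by linarith [mono z y i h])
  have hzero := (Finset.sum_eq_zero_iff_of_nonneg hnn).mp hsum
  have heq : ∀ i, S y i = S z i := by
    intro i
    rcases mul_eq_zero.mp (hzero i (Finset.mem_univ i)) with h | h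
    · exact le_antisymm (mono y z i (by linarith)) (mono z y i (by linarith))
    · linarith
  have hcomb : S (a • y + c • z) = S y := by
    ext i
    have hvi : v (a • y + c • z) i = a * v y i + c * v z i := by simp
    obtain rfl : c = 1 - a := by linarith
    rcases le_total (v y i) (v z i) with h | h
    · refine le_antisymm ?_ (mono _ _ i (by rw [hvi]; nlinarith))
      rw [heq i]
      exact mono _ _ i (by rw [hvi]; nlinarith)
    · refine le_antisymm (mono _ _ i (by rw [hvi]; nlinarith)) ?_
      rw [heq i]
      exact mono _ _ i (by rw [hvi]; nlinarith)
  rw [hcomb, hy]
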